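/- arXiv:1101.1724 — 2 statements merged into one kernel-verified Lean document; each statement's English description precedes it below -/
import Mathlib

section
/- (Recovery of S from X_1 and S̄.) For every j ≥ 1, X_{j+1} = Σ_{l≥0} (−1)^{l+1}·X_1·X̄_j·1{τ_l + 1 ≤ j ≤ τ_{l+1}}. Consequently, the walk (S_j)_{j ≤ n+1} is determined by X_1 = S_1 together with (S̄_j)_{j ≤ n}, for every n ≥ 0. -/
noncomputable section

/-- The walk `S` associated with the sign sequence `X : {1,2,…} → {−1,1}`:
`S 0 = 0`, `S n = X 1 + ⋯ + X n`. -/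
def cvWalk (X : ℕ → ℤ) (n : ℕ) : ℤ := ∑ j ∈ Finset.Icc 1 n, X j

/-- The crossing times of `S`: `τ 0 = 0` and
`τ (l+1) = min {i > τ l : S (i-1) * S (i+1) < 0}`. -/
def cvTau (X : ℕ → ℤ) : ℕ → ℕ
  | 0 => 0
  | l + 1 => sInf {i : ℕ | cvTau X l < i ∧ cvWalk X (i - 1) * cvWalk X (i + 1) < 0}

/-- The increments of the Csaki–Vincze transform `S̄ = T(S)`:
`X̄ j = Σ_{l ≥ 0} (−1)^(l+1) · X 1 · X (j+1) · 1_{τ l + 1 ≤ j ≤ τ (l+1)}`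
(the sum may be truncated to `l ≤ j` since `l ≤ τ l` whenever `τ l + 1 ≤ j`). -/
def cvXbar (X : ℕ → ℤ) (j : ℕ) : ℤ :=
  ∑ l ∈ Finset.range (j + 1),
    (-1 : ℤ) ^ (l + 1) * X 1 * X (j + 1) *
      (if cvTau X l + 1 ≤ j ∧ j ≤ cvTau X (l + 1) then 1 else 0)

/-- The Csaki–Vincze transform `S̄ = T(S)`. -/
def cvSbar (X : ℕ → ℤ) (n : ℕ) : ℤ := ∑ j ∈ Finset.Icc 1 n, cvXbar X j

/-- `Ȳ`-type process of a walk `f`: `max_{0 ≤ k ≤ n} f k − f n`. -/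
def cvYof (f : ℕ → ℤ) (n : ℕ) : ℤ :=
  (Finset.range (n + 1)).sup' Finset.nonempty_range_add_one f - f n

/-- `Ȳ n = max_{0 ≤ k ≤ n} S̄ k − S̄ n`. -/
def cvYbar (X : ℕ → ℤ) (n : ℕ) : ℤ := cvYof (cvSbar X) n

/-! If `S` has `k` crossings before time `j`, then `τ k < j ≤ τ (k + 1)`, so
`X̄ j = (-1) ^ (k + 1) * X 1 * X (j + 1)`. Multiplying once more by `(-1) ^ (k + 1) * X 1` gives
back `X (j + 1)`, because `X 1 ^ 2 = 1`. Since `k` depends only on `S 0, …, S j`, the walk can be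
rebuilt one step at a time. -/

/-- The walk `S` changes sign across time `i`: these are the times that `τ 1, τ 2, …` enumerate.
The condition `1 ≤ i` keeps `i - 1` from being truncated. -/
abbrev IsCVCrossing (X : ℕ → ℤ) (i : ℕ) : Prop :=
  1 ≤ i ∧ cvWalk X (i - 1) * cvWalk X (i + 1) < 0

/-- The number of crossings of `S` strictly before time `j`, that is, the index `l` of the block
`τ l + 1 ≤ j ≤ τ (l + 1)` containing `j`. -/
def cvCrossingCount (X : ℕ → ℤ) (j : ℕ) : ℕ := Nat.count (IsCVCrossing X) j

section

variable {X X' : ℕ → ℤ} {j n : ℕ}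

lemma cvWalk_succ (X : ℕ → ℤ) (n : ℕ) : cvWalk X (n + 1) = cvWalk X n + X (n + 1) :=
  Finset.sum_Icc_succ_top (Nat.le_add_left 1 n) X

lemma cvSbar_succ (X : ℕ → ℤ) (n : ℕ) : cvSbar X (n + 1) = cvSbar X n + cvXbar X (n + 1) :=
  Finset.sum_Icc_succ_top (Nat.le_add_left 1 n) (cvXbar X)

lemma cvTau_succ_eq_nth (hinf : {i | IsCVCrossing X i}.Infinite) (l : ℕ) :
    cvTau X (l + 1) = Nat.nth (IsCVCrossing X) l := by
  induction l with
  | zero => exact Nat.nth_zero.symm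
  | succ l ih =>
    rw [Nat.nth_eq_sInf, cvTau, ih]
    congr 1
    ext i
    refine ⟨fun ⟨hlt, hneg⟩ => ⟨⟨Nat.one_le_of_lt hlt, hneg⟩, fun k hk => ?_⟩,
      fun ⟨hi, hlt⟩ => ⟨hlt l l.lt_succ_self, hi.2⟩⟩
    exact (Nat.nth_monotone hinf (Nat.le_of_lt_succ hk)).trans_lt hlt

lemma le_cvTau_succ_iff (hinf : {i | IsCVCrossing X i}.Infinite) {l : ℕ} :
    j ≤ cvTau X (l + 1) ↔ cvCrossingCount X j ≤ l := by
  rw [cvTau_succ_eq_nth hinf, cvCrossingCount, Nat.count_le_iff_le_nth hinf]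

lemma cvTau_lt_iff (hinf : {i | IsCVCrossing X i}.Infinite) (hj : 1 ≤ j) {l : ℕ} :
    cvTau X l < j ↔ l ≤ cvCrossingCount X j := by
  cases l with
  | zero => exact iff_of_true hj (Nat.zero_le _)
  | succ l => rw [← not_le, le_cvTau_succ_iff hinf, not_le, Nat.succ_le_iff]

lemma mem_cvTau_block_iff (hinf : {i | IsCVCrossing X i}.Infinite) (hj : 1 ≤ j) {l : ℕ} :
    cvTau X l + 1 ≤ j ∧ j ≤ cvTau X (l + 1) ↔ l = cvCrossingCount X j := by
  rw [Nat.succ_le_iff, cvTau_lt_iff hinf hj, le_cvTau_succ_iff hinf, le_antisymm_iff]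

lemma sum_mul_cvTau_block {R : Type*} [NonAssocSemiring R]
    (hinf : {i | IsCVCrossing X i}.Infinite) (hj : 1 ≤ j) (f : ℕ → R) :
    ∑ l ∈ Finset.range (j + 1), f l * (if cvTau X l + 1 ≤ j ∧ j ≤ cvTau X (l + 1) then 1 else 0) =
      f (cvCrossingCount X j) := by
  have hcount : cvCrossingCount X j ∈ Finset.range (j + 1) :=
    Finset.mem_range_succ_iff.2 (Nat.count_le _)
  simp only [mem_cvTau_block_iff hinf hj, mul_ite, mul_one, mul_zero, Finset.sum_ite_eq', hcount,
    if_true]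

lemma cvXbar_eq (hinf : {i | IsCVCrossing X i}.Infinite) (hj : 1 ≤ j) :
    cvXbar X j = (-1) ^ (cvCrossingCount X j + 1) * X 1 * X (j + 1) :=
  sum_mul_cvTau_block hinf hj fun l => (-1) ^ (l + 1) * X 1 * X (j + 1)

lemma sq_mul_apply_succ (hinf : {i | IsCVCrossing X i}.Infinite) (hj : 1 ≤ j) :
    X 1 ^ 2 * X (j + 1) = ∑ l ∈ Finset.range (j + 1), (-1 : ℤ) ^ (l + 1) * X 1 * cvXbar X j *
      (if cvTau X l + 1 ≤ j ∧ j ≤ cvTau X (l + 1) then 1 else 0) := by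
  rw [sum_mul_cvTau_block hinf hj fun l => (-1 : ℤ) ^ (l + 1) * X 1 * cvXbar X j,
    cvXbar_eq hinf hj]
  set ε : ℤ := (-1) ^ (cvCrossingCount X j + 1)
  have hε : ε * ε = 1 := by rw [← mul_pow, neg_one_mul, neg_neg, one_pow]
  linear_combination -X 1 ^ 2 * X (j + 1) * hε

lemma cvCrossingCount_congr (hS : ∀ i ≤ j, cvWalk X' i = cvWalk X i) :
    cvCrossingCount X' j = cvCrossingCount X j := by
  simp only [cvCrossingCount, Nat.count_eq_card_filter_range]
  refine congrArg Finset.card (Finset.filter_congr fun i hi => ?_)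
  have hij : i < j := Finset.mem_range.1 hi
  rw [IsCVCrossing, IsCVCrossing, hS (i - 1) (by lia), hS (i + 1) hij]

lemma cvXbar_congr (hSbar : ∀ i ≤ n, cvSbar X' i = cvSbar X i) (hj : 1 ≤ j) (hjn : j ≤ n) :
    cvXbar X' j = cvXbar X j := by
  obtain ⟨i, rfl⟩ := Nat.exists_eq_add_of_le' hj
  have hsucc := hSbar (i + 1) hjn
  rwa [cvSbar_succ, cvSbar_succ, hSbar i (by lia), add_right_inj] at hsucc

lemma apply_succ_congr (hinf : {i | IsCVCrossing X i}.Infinite)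
    (hinf' : {i | IsCVCrossing X' i}.Infinite) (hX1 : X 1 ≠ 0) (h1 : X' 1 = X 1) (hj : 1 ≤ j)
    (hS : ∀ i ≤ j, cvWalk X' i = cvWalk X i) (hXbar : cvXbar X' j = cvXbar X j) :
    X' (j + 1) = X (j + 1) := by
  rw [cvXbar_eq hinf' hj, cvXbar_eq hinf hj, cvCrossingCount_congr hS, h1] at hXbar
  exact mul_left_cancel₀ (mul_ne_zero (pow_ne_zero _ (by decide)) hX1) hXbar

theorem cvWalk_congr_of_cvSbar (hinf : {i | IsCVCrossing X i}.Infinite)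
    (hinf' : {i | IsCVCrossing X' i}.Infinite) (hX1 : X 1 ≠ 0) (h1 : X' 1 = X 1)
    (hSbar : ∀ j ≤ n, cvSbar X' j = cvSbar X j) :
    ∀ j ≤ n + 1, cvWalk X' j = cvWalk X j := by
  intro j
  induction j using Nat.strong_induction_on with
  | _ j ih =>
    intro hjn
    match j with
    | 0 => rfl
    | 1 => simpa only [cvWalk, Finset.Icc_self, Finset.sum_singleton] using h1
    | j + 2 =>
      have hS : ∀ i ≤ j + 1, cvWalk X' i = cvWalk X i := fun i hi => ih i (by lia) (by lia)
      have hXbar : cvXbar X' (j + 1) = cvXbar X (j + 1) :=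
        cvXbar_congr hSbar (Nat.le_add_left 1 j) (Nat.le_of_succ_le_succ hjn)
      rw [cvWalk_succ, cvWalk_succ X, hS _ le_rfl,
        apply_succ_congr hinf hinf' hX1 h1 (Nat.le_add_left 1 j) hS hXbar]

end

theorem cv_recovery_general (X : ℕ → ℤ) (hX1 : X 1 ≠ 0)
    (hinf : {i : ℕ | 1 ≤ i ∧ cvWalk X (i - 1) * cvWalk X (i + 1) < 0}.Infinite) :
    (∀ j, 1 ≤ j →
      X 1 ^ 2 * X (j + 1) = ∑ l ∈ Finset.range (j + 1),
        (-1 : ℤ) ^ (l + 1) * X 1 * cvXbar X j *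
          (if cvTau X l + 1 ≤ j ∧ j ≤ cvTau X (l + 1) then 1 else 0)) ∧
    (∀ X' : ℕ → ℤ,
      {i : ℕ | 1 ≤ i ∧ cvWalk X' (i - 1) * cvWalk X' (i + 1) < 0}.Infinite →
      X' 1 = X 1 →
      ∀ n : ℕ, (∀ j ≤ n, cvSbar X' j = cvSbar X j) →
        ∀ j ≤ n + 1, cvWalk X' j = cvWalk X j) :=
  ⟨fun _ hj => sq_mul_apply_succ hinf hj,
    fun _ hinf' h1 _ hSbar => cvWalk_congr_of_cvSbar hinf hinf' hX1 h1 hSbar⟩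

/-- **Recovery of `S` from `X 1` and `S̄`.** For every `j ≥ 1`,
`X (j+1) = Σ_{l ≥ 0} (−1)^(l+1) · X 1 · X̄ j · 1_{τ l + 1 ≤ j ≤ τ (l+1)}`.
Consequently, the walk `(S j)_{j ≤ n+1}` is determined by `X 1 = S 1` together with
`(S̄ j)_{j ≤ n}`, for every `n ≥ 0`. -/
theorem cv_recovery (X : ℕ → ℤ) (hX : ∀ j, 1 ≤ j → X j = 1 ∨ X j = -1)
    (hinf : {i : ℕ | 1 ≤ i ∧ cvWalk X (i - 1) * cvWalk X (i + 1) < 0}.Infinite) :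
    (∀ j, 1 ≤ j →
      X (j + 1) = ∑ l ∈ Finset.range (j + 1),
        (-1 : ℤ) ^ (l + 1) * X 1 * cvXbar X j *
          (if cvTau X l + 1 ≤ j ∧ j ≤ cvTau X (l + 1) then 1 else 0)) ∧
    (∀ X' : ℕ → ℤ, (∀ j, 1 ≤ j → X' j = 1 ∨ X' j = -1) →
      {i : ℕ | 1 ≤ i ∧ cvWalk X' (i - 1) * cvWalk X' (i + 1) < 0}.Infinite →
      X' 1 = X 1 →
      ∀ n : ℕ, (∀ j ≤ n, cvSbar X' j = cvSbar X j) →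
        ∀ j ≤ n + 1, cvWalk X' j = cvWalk X j) := by
  have hunit : IsUnit (X 1) := Int.isUnit_iff.2 (hX 1 le_rfl)
  obtain ⟨hstep, hunique⟩ := cv_recovery_general X hunit.ne_zero hinf
  exact ⟨fun j hj => by rw [← hstep j hj, Int.isUnit_sq hunit, one_mul], fun X' _ => hunique X'⟩
end
end

section
/- For all integers p < n < q: if min_{p ≤ h ≤ n} S_h = min_{p ≤ h ≤ q} S_h and S⁺_{p,j} > 0 for every j with n ≤ j ≤ q, then e(Ψ_{p,n}(0)) = e(Ψ_{p,q}(0)). -/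
noncomputable section

/-- The star graph `G` with `N` half-lines `D_1, …, D_N` glued at the origin, realized by
canonical representatives in `Fin N × ℝ`: a point is a pair (ray index, distance to the
origin), the origin being represented on the ray of index `N - 1` (i.e. the ray `e_N`,
matching the convention `e(0) = e_N`). -/
def StarG (N : ℕ) : Type :=
  {p : Fin N × ℝ // 0 ≤ p.2 ∧ (p.2 = 0 → (p.1 : ℕ) = N - 1)}

namespace StarG

variable {N : ℕ}

instance : DecidableEq (StarG N) :=
  inferInstanceAs (DecidableEq {p : Fin N × ℝ // 0 ≤ p.2 ∧ (p.2 = 0 → (p.1 : ℕ) = N - 1)})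

instance : MeasurableSpace (StarG N) :=
  inferInstanceAs (MeasurableSpace {p : Fin N × ℝ // 0 ≤ p.2 ∧ (p.2 = 0 → (p.1 : ℕ) = N - 1)})

/-- The ray index `e(x)` of a point, with the convention `e(0) = e_N`. -/
def ray (x : StarG N) : Fin N := x.1.1

/-- `|x| = d(x, 0)`, the distance from `x` to the origin. -/
def nrm (x : StarG N) : ℝ := x.1.2

/-- The distance on `G`: `d(h·e_i, h'·e_j) = |h − h'|` if `i = j` and `h + h'` if
`i ≠ j`. -/
def dist (x y : StarG N) : ℝ :=
  if x.ray = y.ray then |x.nrm - y.nrm| else x.nrm + y.nrm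

/-- The origin `0` of `G` (requires `N ≥ 1`). -/
def origin (hN : 1 ≤ N) : StarG N :=
  ⟨(⟨N - 1, by omega⟩, 0), le_refl 0, fun _ => rfl⟩

/-- The point `h·e_i` (sent to the origin when `h ≤ 0`; in particular `0·e_i = 0` for
every `i`).  For `x` on the ray `D_i` and `t ≥ −|x|`, the point `x + e(x)·t` is
`pt hN (ray x) (nrm x + t)`. -/
def pt (hN : 1 ≤ N) (i : Fin N) (h : ℝ) : StarG N :=
  if hh : 0 < h then ⟨(i, h), le_of_lt hh, fun h0 => absurd h0 (ne_of_gt hh)⟩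
  else origin hN

/-- `x ∈ D_i` : the point `x` lies on the `i`-th half-line (the origin lies on all). -/
def memRay (x : StarG N) (i : Fin N) : Prop := x.ray = i ∨ x.nrm = 0

/-- `x ∈ G_ℕ` : the distance from `x` to the origin is a natural number. -/
def isLattice (x : StarG N) : Prop := ∃ m : ℕ, x.nrm = (m : ℝ)

end StarG

/-- `min_{p ≤ h ≤ n} S h` (junk value `0` when `n < p`). -/
def walkMin (S : ℤ → ℤ) (p n : ℤ) : ℤ :=
  if h : p ≤ n then (Finset.Icc p n).inf' (Finset.nonempty_Icc.mpr h) S else 0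

/-- `S⁺_{p,n} = S_{p,n} − min_{p ≤ h ≤ n} S_{p,h} = S n − min_{p ≤ h ≤ n} S h`. -/
def walkPlus (S : ℤ → ℤ) (p n : ℤ) : ℤ := S n - walkMin S p n

/-- The one-step map `Ψ_{p,p+1}` on `G_ℕ`:
`Ψ_{p,p+1}(x) = x + e(x)·S_{p,p+1}` for `x ≠ 0` and `Ψ_{p,p+1}(0) = S⁺_{p,p+1}·η_p`. -/
def psiStep {N : ℕ} (hN : 1 ≤ N) (S : ℤ → ℤ) (η : ℤ → Fin N) (p : ℤ) (x : StarG N) :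
    StarG N :=
  if x.nrm = 0 then StarG.pt hN (η p) ((walkPlus S p (p + 1) : ℤ) : ℝ)
  else StarG.pt hN x.ray (x.nrm + ((S (p + 1) - S p : ℤ) : ℝ))

/-- `k`-fold composition: `psiAux hN S η p k = Ψ_{p+k-1,p+k} ∘ ⋯ ∘ Ψ_{p,p+1}`. -/
def psiAux {N : ℕ} (hN : 1 ≤ N) (S : ℤ → ℤ) (η : ℤ → Fin N) (p : ℤ) :
    ℕ → StarG N → StarG N
  | 0 => id
  | k + 1 => fun x => psiStep hN S η (p + k) (psiAux hN S η p k x)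

/-- The discrete flow of mappings `Ψ_{p,n} = Ψ_{n−1,n} ∘ ⋯ ∘ Ψ_{p,p+1}` (the identity
when `n ≤ p`). -/
def psiFlow {N : ℕ} (hN : 1 ≤ N) (S : ℤ → ℤ) (η : ℤ → Fin N) (p n : ℤ) (x : StarG N) :
    StarG N :=
  psiAux hN S η p (n - p).toNat x

/-! On `|x|` the one-step map acts as `r ↦ max (r + S_{n,n+1}) 0`, whatever the ray. This is the
recursion which `S⁺_{p,·}` satisfies, so `|Ψ_{p,n}(0)| = S⁺_{p,n}`. Since a step which starts and
ends off the origin cannot change ray, `e(Ψ_{p,·}(0))` is constant for as long as `S⁺_{p,·}` stays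
positive. -/

theorem walkMin_self (S : ℤ → ℤ) (p : ℤ) : walkMin S p p = S p := by
  simp [walkMin]

theorem walkMin_add_one (S : ℤ → ℤ) {p n : ℤ} (hpn : p ≤ n) :
    walkMin S p (n + 1) = min (walkMin S p n) (S (n + 1)) := by
  have hpn' : p ≤ n + 1 := by lia
  simp only [walkMin, hpn, hpn', dif_pos, ← Finset.insert_Icc_right_eq_Icc_add_one hpn']
  rw [Finset.inf'_insert, inf_comm]

theorem walkPlus_self (S : ℤ → ℤ) (p : ℤ) : walkPlus S p p = 0 := by
  rw [walkPlus, walkMin_self, sub_self]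

theorem walkPlus_add_one (S : ℤ → ℤ) {p n : ℤ} (hpn : p ≤ n) :
    walkPlus S p (n + 1) = max (walkPlus S p n + (S (n + 1) - S n)) 0 := by
  rw [walkPlus, walkPlus, walkMin_add_one S hpn]
  lia

theorem walkPlus_self_add_one (S : ℤ → ℤ) (p : ℤ) :
    walkPlus S p (p + 1) = max (S (p + 1) - S p) 0 := by
  rw [walkPlus_add_one S le_rfl, walkPlus_self, zero_add]

namespace StarG

variable {N : ℕ}

theorem nrm_origin (hN : 1 ≤ N) : (origin hN).nrm = 0 := rfl

theorem pt_of_nonpos (hN : 1 ≤ N) (i : Fin N) {h : ℝ} (hh : h ≤ 0) : pt hN i h = origin hN :=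
  dif_neg hh.not_gt

theorem nrm_pt_of_pos (hN : 1 ≤ N) (i : Fin N) {h : ℝ} (hh : 0 < h) : (pt hN i h).nrm = h :=
  congrArg nrm (dif_pos hh)

theorem ray_pt_of_pos (hN : 1 ≤ N) (i : Fin N) {h : ℝ} (hh : 0 < h) : (pt hN i h).ray = i :=
  congrArg ray (dif_pos hh)

theorem nrm_pt (hN : 1 ≤ N) (i : Fin N) (h : ℝ) : (pt hN i h).nrm = max h 0 := by
  rcases le_or_gt h 0 with hh | hh
  · rw [pt_of_nonpos hN i hh, nrm_origin, max_eq_right hh]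
  · rw [nrm_pt_of_pos hN i hh, max_eq_left hh.le]

end StarG

section Flow

variable {N : ℕ} (hN : 1 ≤ N) (S : ℤ → ℤ) (η : ℤ → Fin N)

theorem nrm_psiStep (n : ℤ) (x : StarG N) :
    (psiStep hN S η n x).nrm = max (x.nrm + ((S (n + 1) - S n : ℤ) : ℝ)) 0 := by
  unfold psiStep
  split_ifs with hx
  · rw [StarG.nrm_pt, walkPlus_self_add_one, hx, zero_add]
    push_cast
    rw [max_assoc, max_self]
  · rw [StarG.nrm_pt]

theorem ray_psiStep_of_nrm_ne_zero {n : ℤ} {x : StarG N} (hx : x.nrm ≠ 0)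
    (hstep : (psiStep hN S η n x).nrm ≠ 0) : (psiStep hN S η n x).ray = x.ray := by
  have hpos : 0 < x.nrm + ((S (n + 1) - S n : ℤ) : ℝ) := by
    by_contra hle
    exact hstep ((nrm_psiStep hN S η n x).trans (max_eq_right (not_lt.mp hle)))
  rw [psiStep, if_neg hx, StarG.ray_pt_of_pos hN _ hpos]

theorem psiFlow_self (p : ℤ) (x : StarG N) : psiFlow hN S η p p x = x := by
  simp [psiFlow, psiAux]

theorem psiFlow_add_one {p n : ℤ} (hpn : p ≤ n) (x : StarG N) :
    psiFlow hN S η p (n + 1) x = psiStep hN S η n (psiFlow hN S η p n x) := by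
  obtain ⟨k, rfl⟩ := Int.le.dest hpn
  have hk : (p + k - p).toNat = k := by lia
  have hk' : (p + k + 1 - p).toNat = k + 1 := by lia
  rw [psiFlow, psiFlow, hk, hk', psiAux]

theorem nrm_psiFlow_origin {p n : ℤ} (hpn : p ≤ n) :
    (psiFlow hN S η p n (StarG.origin hN)).nrm = walkPlus S p n := by
  induction n, hpn using Int.leInduction with
  | base => rw [psiFlow_self, StarG.nrm_origin, walkPlus_self, Int.cast_zero]
  | succ n hpn ih =>
    rw [psiFlow_add_one hN S η hpn, nrm_psiStep, ih, walkPlus_add_one S hpn]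
    push_cast
    rfl

theorem ray_psiFlow_eq_of_nrm_ne_zero {p n q : ℤ} (hpn : p ≤ n) (hnq : n ≤ q) {x : StarG N}
    (hx : ∀ j, n ≤ j → j ≤ q → (psiFlow hN S η p j x).nrm ≠ 0) :
    (psiFlow hN S η p n x).ray = (psiFlow hN S η p q x).ray := by
  induction q, hnq using Int.leInduction with
  | base => rfl
  | succ q hnq ih =>
    have hq := hx q hnq (by lia)
    have hq' := hx (q + 1) (by lia) le_rfl
    rw [psiFlow_add_one hN S η (hpn.trans hnq)] at hq' ⊢
    rw [ray_psiStep_of_nrm_ne_zero hN S η hq hq']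
    exact ih fun j hnj hjq => hx j hnj (by lia)

/-- A downward step of `S` may be longer than the distance to the origin: `StarG.pt` then stops it
there, in agreement with the reflection in `S⁺`. -/
theorem psiFlow_ray_eq_of_min_eq_of_pos_general {p n q : ℤ} (hpn : p ≤ n) (hnq : n ≤ q)
    (hpos : ∀ j : ℤ, n ≤ j → j ≤ q → 0 < walkPlus S p j) :
    (psiFlow hN S η p n (StarG.origin hN)).ray = (psiFlow hN S η p q (StarG.origin hN)).ray := by
  refine ray_psiFlow_eq_of_nrm_ne_zero hN S η hpn hnq fun j hnj hjq => ?_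
  rw [nrm_psiFlow_origin hN S η (hpn.trans hnj)]
  exact_mod_cast (hpos j hnj hjq).ne'

end Flow

/-- For all integers `p < n < q`: if `min_{p ≤ h ≤ n} S h = min_{p ≤ h ≤ q} S h` and
`S⁺_{p,j} > 0` for every `n ≤ j ≤ q`, then `e(Ψ_{p,n}(0)) = e(Ψ_{p,q}(0))`. -/
theorem psiFlow_ray_eq_of_min_eq_of_pos (N : ℕ) (hN : 1 ≤ N) (S : ℤ → ℤ)
    (hS : ∀ n : ℤ, S n - S (n - 1) = 1 ∨ S n - S (n - 1) = -1)
    (η : ℤ → Fin N) (p n q : ℤ) (hpn : p < n) (hnq : n < q)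
    (hmin : walkMin S p n = walkMin S p q)
    (hpos : ∀ j : ℤ, n ≤ j → j ≤ q → 0 < walkPlus S p j) :
    (psiFlow hN S η p n (StarG.origin hN)).ray = (psiFlow hN S η p q (StarG.origin hN)).ray :=
  psiFlow_ray_eq_of_min_eq_of_pos_general hN S η hpn.le hnq.le hpos
end
end
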